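/- For every nonempty rich word w of length n there exists a word u with |u| ≤ n such that wu is rich and wu can be extended in at least two ways (i.e., φ(n) ≤ n). -/

import Mathlib

def Rich {A : Type*} (w : List A) : Prop :=
  {p : List A | p.reverse = p ∧ p <:+: w}.ncard = w.length + 1
/-- `v` can be extended (to a rich word) in at least two ways. -/
def TwoWays {A : Type*} (v : List A) : Prop :=
  ∃ x y : A, x ≠ y ∧ Rich (v ++ [x]) ∧ Rich (v ++ [y])

/-!
Words are read as initial segments of sequences `ℤ → A`. A word is rich iff each of its nonempty
prefixes has a palindromic suffix without an earlier occurrence.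

Close `w` to a rich palindrome of length `M < 2 * |w|` and continue it periodically, with the least
period `d` for which this is possible: the resulting `g : ℤ → A` is symmetric about `(M - 1) / 2`
and about `(M - 1 + d) / 2`, and all its prefixes are rich. If `g` misses a letter, that letter can
follow `w`. Otherwise look at the palindromes of `g` whose centre lies strictly between these two
axes. The word `g 0 ⋯ g (M - 1)` has no such suffix, so for some `e < M` there is one ending at `e`
but none ending at `e + 1`. Let `P` be the longest one ending at `e`, and let `x ≠ y` be the letters
before and after it. Complete returns to palindromes are palindromes in rich words, so, up to
translation by `d`, `P` occurs in `g` only here, as `xPy`, and at the mirror position, as `yPx`.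
Hence `xPx` does not occur in `g`, and both `x` and `y` may follow `g 0 ⋯ g (e - 1)`. If `d ≤ |w|`,
a translation by a multiple of `d` puts `e` between `|w|` and `2 * |w|`; if `|w| < d`, then `e` can
be chosen there from the start, because the empty palindrome ending at `|w|` lies between the axes.
-/

section Integers

variable {a b d e n : ℤ}

theorem eq_of_periodic_of_dvd_sub {A : Type*} {f : ℤ → A} (h : Function.Periodic f d)
    (hd : d ∣ a - b) : f a = f b := by
  obtain ⟨m, hm⟩ := hd
  have hshift := h.int_mul m b
  rwa [Int.cast_id, mul_comm, ← hm, add_sub_cancel] at hshift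

theorem exists_and_not_succ {p : ℤ → Prop} (hab : a ≤ b) (ha : p a) (hb : ¬ p b) :
    ∃ e, a ≤ e ∧ e < b ∧ p e ∧ ¬ p (e + 1) := by
  by_contra! hp
  refine hb (Int.leInduction (motive := fun e _ => e ≤ b → p e) (fun _ => ha) ?_ b hab le_rfl)
  exact fun e hae ih heb => hp e hae (by omega) (ih (by omega))

theorem exists_dvd_add_mem_Icc (hd : 0 < d) (hen : e ≤ 2 * n) (h : n ≤ e ∨ d ≤ n) :
    ∃ D, d ∣ D ∧ 0 ≤ D ∧ e + D ∈ Set.Icc n (2 * n) := by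
  rcases le_or_gt n e with hne | hlt
  · exact ⟨0, dvd_zero d, le_rfl, by simpa using ⟨hne, hen⟩⟩
  have hr0 := Int.emod_nonneg (e - n) hd.ne'
  have hrd := Int.emod_lt_of_pos (e - n) hd
  refine ⟨-(e - n - (e - n) % d), dvd_neg.2 Int.dvd_self_sub_emod, ?_, ?_, ?_⟩ <;> omega

end Integers

section Factors

variable {A : Type*} {f g : ℤ → A} {a b i j k l : ℤ}

/-- The factor of `f` on the positions `i ≤ k < j` is a palindrome: positions mirrored in it carry
the same letter. It is empty, hence a palindrome, when `j ≤ i`. -/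
def IsPal (f : ℤ → A) (i j : ℤ) : Prop :=
  ∀ a b, i ≤ a → i ≤ b → a + b + 1 = i + j → f a = f b

/-- The factors of length `l` of `f` starting at `i` and at `j` are equal: positions `a` and `b` at
the same offset in them carry the same letter. -/
def SameFactor (f : ℤ → A) (l i j : ℤ) : Prop :=
  ∀ a b, i ≤ a → a < i + l → a - i = b - j → f a = f b

theorem isPal_of_le_add_one (h : j ≤ i + 1) : IsPal f i j :=
  fun a b _ _ _ => congrArg f (by omega)

theorem IsPal.congr (h : IsPal f i j) (hfg : Set.EqOn g f (Set.Ico i j)) : IsPal g i j := by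
  intro a b ha hb hab
  rw [hfg ⟨ha, by omega⟩, hfg ⟨hb, by omega⟩, h a b ha hb hab]

theorem IsPal.shrink (h : IsPal f i j) (hk : 0 ≤ k) : IsPal f (i + k) (j - k) :=
  fun a b _ _ _ => h a b (by omega) (by omega) (by omega)

theorem IsPal.extend (h : IsPal f i j) (hij : f (i - 1) = f j) : IsPal f (i - 1) (j + 1) := by
  intro a b ha hb hab
  rcases eq_or_ne a (i - 1) with rfl | hai
  · rwa [show b = j by omega]
  rcases eq_or_ne b (i - 1) with rfl | hbi
  · rw [hij, show a = j by omega]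
  · exact h a b (by omega) (by omega) (by omega)

theorem SameFactor.symm (h : SameFactor f l i j) : SameFactor f l j i :=
  fun a b _ _ _ => (h b a (by omega) (by omega) (by omega)).symm

theorem SameFactor.trans (h : SameFactor f l i j) (h' : SameFactor f l j k) :
    SameFactor f l i k :=
  fun a b _ _ _ => (h a (a - i + j) (by omega) (by omega) (by omega)).trans
    (h' _ b (by omega) (by omega) (by omega))

theorem IsPal.of_sameFactor (h : IsPal f i (i + l)) (hij : SameFactor f l i j) :
    IsPal f j (j + l) := by
  intro a b ha hb hab
  rw [hij.symm a (a - j + i) ha (by omega) (by omega),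
    hij.symm b (b - j + i) hb (by omega) (by omega)]
  exact h _ _ (by omega) (by omega) (by omega)

theorem IsPal.mirror (h : IsPal f a b) (hp : IsPal f i j) (hai : a ≤ i) (hjb : j ≤ b) :
    IsPal f (a + b - j) (a + b - i) := by
  intro x y hx hy hxy
  rw [h x (a + b - 1 - x) (by omega) (by omega) (by omega),
    h y (a + b - 1 - y) (by omega) (by omega) (by omega)]
  exact hp _ _ (by omega) (by omega) (by omega)

theorem IsPal.sameFactor_mirror (h : IsPal f a b) (hp : IsPal f i (i + l)) (hai : a ≤ i)
    (hib : i + l ≤ b) : SameFactor f l i (a + b - l - i) := by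
  intro x y hx hxl hxy
  rw [hp x (i + i + l - 1 - x) hx (by omega) (by omega)]
  exact h _ _ (by omega) (by omega) (by omega)

end Factors

section Richness

variable {A : Type*} {f g : ℤ → A} {B C i j l n : ℤ}

/-- The word `f 0 ⋯ f (N - 1)` has a nonempty palindromic suffix that occurs in it only once. -/
def HasUnioccurrentPalSuffix (f : ℤ → A) (N : ℤ) : Prop :=
  ∃ s, 0 ≤ s ∧ s < N ∧ IsPal f s N ∧ ∀ t, 0 ≤ t → t < s → ¬ SameFactor f (N - s) s t

/-- The word `f 0 ⋯ f (B - 1)` is rich, expressed through its prefixes; see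
`rich_factor_iff_richTo`. -/
def RichTo (f : ℤ → A) (B : ℤ) : Prop :=
  ∀ N, 0 < N → N ≤ B → HasUnioccurrentPalSuffix f N

theorem HasUnioccurrentPalSuffix.congr (h : HasUnioccurrentPalSuffix f n)
    (hfg : Set.EqOn g f (Set.Ico 0 n)) : HasUnioccurrentPalSuffix g n := by
  obtain ⟨s, hs0, hsn, hpal, huni⟩ := h
  refine ⟨s, hs0, hsn, hpal.congr (hfg.mono (Set.Ico_subset_Ico_left hs0)), fun t ht0 hts hst =>
    huni t ht0 hts fun a b ha han hab => ?_⟩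
  rw [← hfg ⟨by omega, by omega⟩, ← hfg ⟨by omega, by omega⟩]
  exact hst a b ha han hab

theorem RichTo.congr (h : RichTo f B) (hfg : Set.EqOn g f (Set.Ico 0 B)) : RichTo g B :=
  fun N hN hNB => (h N hN hNB).congr (hfg.mono (Set.Ico_subset_Ico_right hNB))

theorem RichTo.mono (h : RichTo f B) (hC : C ≤ B) : RichTo f C :=
  fun N hN hNC => h N hN (hNC.trans hC)

theorem RichTo.succ (h : RichTo f n) (hn : HasUnioccurrentPalSuffix f (n + 1)) :
    RichTo f (n + 1) := by
  intro N hN hNn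
  rcases hNn.eq_or_lt with rfl | hlt
  · exact hn
  · exact h N hN (by omega)

theorem RichTo.isPal_completeReturn (h : RichTo f (j + l)) (hi : 0 ≤ i) (hij : i < j) (hl : 0 ≤ l)
    (hpal : IsPal f i (i + l)) (hocc : SameFactor f l i j)
    (hret : ∀ t, i < t → t < j → ¬ SameFactor f l i t) : IsPal f i (j + l) := by
  induction hN : (j + l).toNat using Nat.strong_induction_on generalizing i j with
  | _ N ih =>
  obtain ⟨s, hs0, _, hs, huni⟩ := h (j + l) (by omega) le_rfl
  have hsj : s < j := by
    by_contra! hjs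
    exact huni (s - j + i) (by omega) (by omega)
      fun a b _ _ _ => hocc.symm a b (by omega) (by omega) (by omega)
  have hocc_s : SameFactor f l i s := by
    have := hs.sameFactor_mirror (hpal.of_sameFactor hocc) hsj.le le_rfl
    rw [show s + (j + l) - l - j = s by ring] at this
    exact hocc.trans this
  have hsi : s ≤ i := by
    by_contra! his
    exact hret s his hsj hocc_s
  rcases hsi.eq_or_lt with rfl | hlt
  · exact hs
  -- The mirror image of the return in the suffix starting at `s` is a shorter complete return.
  have hmirror : IsPal f s (s + j - i + l) := by
    have hpal_s := hpal.of_sameFactor hocc_s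
    refine ih _ ?_ (h.mono (by omega)) hs0 (by omega) hpal_s (hocc_s.symm.trans ?_)
      (fun t hst htj ht => ?_) rfl
    · omega
    · have := hs.sameFactor_mirror hpal hsi (by omega)
      rwa [show s + (j + l) - l - i = s + j - i by ring] at this
    · have := hs.sameFactor_mirror (hpal_s.of_sameFactor ht) hst.le (by omega)
      exact hret (s + (j + l) - l - t) (by omega) (by omega) (hocc_s.trans (ht.trans this))
  convert hs.mirror hmirror le_rfl (by omega) using 1 <;> ring

theorem RichTo.exists_isPal_of_sameFactor_right (h : RichTo f (j + l)) (hi : 0 ≤ i) (hij : i < j)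
    (hl : 0 ≤ l) (hpal : IsPal f i (i + l)) (hocc : SameFactor f l i j) :
    ∃ t, i < t ∧ t ≤ j ∧ IsPal f i (t + l) := by
  obtain ⟨t, ⟨hit, ht⟩, hmin⟩ := Int.exists_least_of_bdd
    (P := fun t => i < t ∧ SameFactor f l i t) ⟨i, fun _ hz => hz.1.le⟩ ⟨j, hij, hocc⟩
  have htj := hmin j ⟨hij, hocc⟩
  exact ⟨t, hit, htj, (h.mono (by omega)).isPal_completeReturn hi hit hl hpal ht
    fun u hiu hut hu => (hmin u ⟨hiu, hu⟩).not_gt hut⟩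

theorem RichTo.exists_isPal_of_sameFactor_left (h : RichTo f (j + l)) (hi : 0 ≤ i) (hij : i < j)
    (hl : 0 ≤ l) (hpal : IsPal f i (i + l)) (hocc : SameFactor f l i j) :
    ∃ t, i ≤ t ∧ t < j ∧ IsPal f t (j + l) := by
  obtain ⟨t, ⟨htj, ht⟩, hmax⟩ := Int.exists_greatest_of_bdd
    (P := fun t => t < j ∧ SameFactor f l i t) ⟨j, fun _ hz => hz.1.le⟩
    ⟨i, hij, fun a b _ _ _ => congrArg f (by omega)⟩
  have hit := hmax i ⟨hij, fun a b _ _ _ => congrArg f (by omega)⟩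
  exact ⟨t, hit, htj, h.isPal_completeReturn (hi.trans hit) htj hl (hpal.of_sameFactor ht)
    (ht.symm.trans hocc) fun u htu huj hu => (hmax u ⟨huj, ht.trans hu⟩).not_gt htu⟩

/-- The extension is the palindromic closure of `f 0 ⋯ f (n - 1)`. -/
theorem RichTo.exists_isPal_extension (h : RichTo f n) (hn : 0 < n) :
    ∃ (g : ℤ → A) (M : ℤ), n ≤ M ∧ M < 2 * n ∧ Set.EqOn g f (Set.Ico 0 n) ∧ IsPal g 0 M ∧
      RichTo g M := by
  obtain ⟨s, hs0, hsn, hs, huni⟩ := h n hn le_rfl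
  let g : ℤ → A := fun k => if k < n then f k else f (n + s - 1 - k)
  have hg_lt : ∀ k, k < n → g k = f k := fun k hk => if_pos hk
  have hg_ge : ∀ k, n ≤ k → g k = f (n + s - 1 - k) := fun k hk => if_neg hk.not_gt
  have hgf : Set.EqOn g f (Set.Ico 0 n) := fun k hk => hg_lt k hk.2
  have hpal : IsPal g 0 (n + s) := by
    intro a b _ _ hab
    rcases lt_or_ge a n with han | hna <;> rcases lt_or_ge b n with hbn | hnb
    · rw [hg_lt a han, hg_lt b hbn]
      exact hs a b (by omega) (by omega) (by omega)
    · rw [hg_lt a han, hg_ge b hnb]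
      exact congrArg f (by omega)
    · rw [hg_ge a hna, hg_lt b hbn]
      exact congrArg f (by omega)
    · omega
  refine ⟨g, n + s, by omega, by omega, hgf, hpal, fun N hN hNM => ?_⟩
  rcases le_or_gt N n with hNn | hnN
  · exact h.congr hgf N hN hNn
  refine ⟨n + s - N, by omega, by omega, ?_, fun t ht0 hts ht => ?_⟩
  · convert hpal.shrink (k := n + s - N) (by omega) using 1 <;> ring
  · refine huni (t + N - n) (by omega) (by omega) fun a b ha han hab => ?_
    rw [← hg_lt a (by omega), ← hg_lt b (by omega)]
    exact ht a b (by omega) (by omega) (by omega)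

theorem RichTo.update_of_notMem_range {a : A} (h : RichTo f n) (hn : 0 ≤ n)
    (ha : a ∉ Set.range f) : RichTo (Function.update f n a) (n + 1) := by
  have hcongr : Set.EqOn (Function.update f n a) f (Set.Ico 0 n) :=
    fun k hk => Function.update_of_ne hk.2.ne _ _
  refine (h.congr hcongr).succ
    ⟨n, hn, by omega, isPal_of_le_add_one le_rfl, fun t _ htn ht => ha ⟨t, ?_⟩⟩
  have := ht n t le_rfl (by omega) (by omega)
  rw [Function.update_self, Function.update_of_ne htn.ne] at this
  exact this.symm

end Richness

section PeriodicSequences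

variable {A : Type*} {f g : ℤ → A} {B M d e i j l n : ℤ}

theorem isPal_of_periodic_of_reflect (hper : Function.Periodic g d)
    (hrefl : ∀ a b, a + b + 1 = M → g a = g b) (hd : d ∣ i + j - M) : IsPal g i j := by
  intro a b _ _ hab
  rw [hrefl a (M - 1 - a) (by ring)]
  refine eq_of_periodic_of_dvd_sub hper ?_
  rwa [show M - 1 - a - b = -(i + j - M) by omega, dvd_neg]

theorem sameFactor_of_periodic (hper : Function.Periodic g d) (hd : d ∣ j - i) :
    SameFactor g l i j := by
  intro a b _ _ hab
  refine eq_of_periodic_of_dvd_sub hper ?_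
  rwa [show a - b = -(j - i) by omega, dvd_neg]

theorem exists_periodic_of_isPal (hd : 0 < d) (hdM : d ≤ M) (h0 : IsPal f 0 M)
    (hpal : IsPal f d M) :
    ∃ g : ℤ → A, Set.EqOn g f (Set.Ico 0 M) ∧ Function.Periodic g d ∧
      ∀ a b, a + b + 1 = M → g a = g b := by
  have hper : Function.Periodic (fun k => f (k % d)) d := fun k => by
    simp only [Int.add_emod_right]
  have hgf : ∀ k, 0 ≤ k → k < M → f (k % d) = f k := by
    intro k hk0 hkM
    induction hN : k.toNat using Nat.strong_induction_on generalizing k with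
    | _ N ih =>
    rcases lt_or_ge k d with hkd | hdk
    · rw [Int.emod_eq_of_lt hk0 hkd]
    -- Composing the reflections of `hpal` and `h0` translates by `d`.
    calc f (k % d) = f ((k - d) % d) := by rw [Int.sub_emod_right]
      _ = f (k - d) := ih _ (by omega) (k - d) (by omega) (by omega) rfl
      _ = f (M - 1 - (k - d)) := h0 _ _ (by omega) (by omega) (by omega)
      _ = f k := hpal _ _ (by omega) (by omega) (by omega)
  refine ⟨fun k => f (k % d), fun k hk => hgf k hk.1 hk.2, hper, fun a b hab => ?_⟩
  have hr0 := Int.emod_nonneg a hd.ne'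
  have hrd := Int.emod_lt_of_pos a hd
  calc f (a % d) = f (M - 1 - a % d) := h0 _ _ (by omega) (by omega) (by omega)
    _ = f ((M - 1 - a % d) % d) := (hgf _ (by omega) (by omega)).symm
    _ = f (b % d) := by
      refine eq_of_periodic_of_dvd_sub (f := fun k => f (k % d)) hper ?_
      rw [show M - 1 - a % d - b = a - a % d by omega]
      exact Int.dvd_self_sub_emod

theorem RichTo.of_periodic (h : RichTo g M) (hd : 0 < d) (hdM : d ≤ M)
    (hper : Function.Periodic g d) (hrefl : ∀ a b, a + b + 1 = M → g a = g b)
    (hmin : ∀ t, 0 < t → t < d → ¬ IsPal g t M) : RichTo g B := by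
  have hnew : ∀ t, 0 < t → t < d → ¬ SameFactor g (M - d) d t := by
    intro t ht0 htd ht
    have hpal_d : IsPal g d (d + (M - d)) :=
      isPal_of_periodic_of_reflect hper hrefl ⟨1, by ring⟩
    obtain ⟨u, htu, hud, hu⟩ := RichTo.exists_isPal_of_sameFactor_left (by rwa [add_sub_cancel])
      ht0.le htd (by omega) (hpal_d.of_sameFactor ht) ht.symm
    rw [add_sub_cancel] at hu
    exact hmin u (ht0.trans_le htu) hud hu
  intro N hN _
  rcases le_or_gt N M with hNM | hMN
  · exact h N hN hNM
  have hs0 := Int.emod_nonneg (M - N) hd.ne'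
  have hsd := Int.emod_lt_of_pos (M - N) hd
  refine ⟨(M - N) % d, hs0, by omega, ?_, fun t ht0 hts ht => ?_⟩
  · refine isPal_of_periodic_of_reflect hper hrefl ?_
    rw [show (M - N) % d + N - M = -(M - N - (M - N) % d) by ring, dvd_neg]
    exact Int.dvd_self_sub_emod
  · exact hnew (d - ((M - N) % d - t)) (by omega) (by omega)
      fun a b _ _ _ => ht a b (by omega) (by omega) (by omega)

/-- The sequence `g` continues a rich palindrome of length `M` periodically. Its period `d` is the
least one for which `g` is symmetric, as `not_isPal` expresses. -/
structure IsRichPeriodic (g : ℤ → A) (d M : ℤ) : Prop where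
  pos : 0 < d
  periodic : Function.Periodic g d
  reflect : ∀ a b, a + b + 1 = M → g a = g b
  richTo : ∀ B, RichTo g B
  not_isPal : ∀ t, 0 < t → t < d → ¬ IsPal g t M

theorem RichTo.exists_isRichPeriodic (h : RichTo f M) (hM : 0 < M) (hpal : IsPal f 0 M) :
    ∃ (g : ℤ → A) (d : ℤ), Set.EqOn g f (Set.Ico 0 M) ∧ IsRichPeriodic g d M := by
  obtain ⟨d, ⟨hd, hdpal⟩, hmin⟩ := Int.exists_least_of_bdd
    (P := fun t => 0 < t ∧ IsPal f t M) ⟨0, fun _ hz => hz.1.le⟩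
    ⟨M, hM, isPal_of_le_add_one (by omega)⟩
  have hdM : d ≤ M := hmin M ⟨hM, isPal_of_le_add_one (by omega)⟩
  obtain ⟨g, hgf, hper, hrefl⟩ := exists_periodic_of_isPal hd hdM hpal hdpal
  have hg_min : ∀ t, 0 < t → t < d → ¬ IsPal g t M := fun t ht htd hg =>
    (hmin t ⟨ht, hg.congr (hgf.symm.mono (Set.Ico_subset_Ico_left ht.le))⟩).not_gt htd
  exact ⟨g, d, hgf, hd, hper, hrefl, fun _ => (h.congr hgf).of_periodic hd hdM hper hrefl hg_min,
    hg_min⟩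

theorem IsRichPeriodic.two_le_of_surjective [Nontrivial A] (h : IsRichPeriodic g d M)
    (hg : Function.Surjective g) : 2 ≤ d := by
  by_contra! hd
  obtain rfl : d = 1 := by have := h.pos; omega
  obtain ⟨x, y, hxy⟩ := exists_pair_ne A
  obtain ⟨a, rfl⟩ := hg x
  obtain ⟨b, rfl⟩ := hg y
  exact hxy (eq_of_periodic_of_dvd_sub h.periodic (one_dvd _))

/-- A palindrome of `g` ends at `e` and has its centre strictly between the axes of symmetry
`(M - 1) / 2` and `(M - 1 + d) / 2`; the conditions on its starting position `i` compare the centre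
`(i + e - 1) / 2` with the axes. -/
def HasPalBetweenAxes (g : ℤ → A) (d M e : ℤ) : Prop :=
  ∃ i, M - e < i ∧ i < M - e + d ∧ IsPal g i e

/-- The sequence `g` can branch at `e`: the palindrome `P` on the positions `i ≤ k < e` is preceded
by a letter `x = g (i - 1)` such that `xPx` does not occur in `g`. -/
structure IsBranching (g : ℤ → A) (i e : ℤ) : Prop where
  le : i ≤ e
  isPal : IsPal g i e
  ne_of_sameFactor : ∀ t, SameFactor g (e - i + 1) (i - 1) t → g (t + (e - i + 1)) ≠ g (i - 1)

theorem IsBranching.ne (h : IsBranching g i e) : g (i - 1) ≠ g e := by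
  have := h.ne_of_sameFactor (i - 1) fun a b _ _ _ => congrArg g (by omega)
  rwa [show i - 1 + (e - i + 1) = e by ring, ne_comm] at this

theorem IsBranching.add_period (h : IsBranching g i e) (hper : Function.Periodic g l) :
    IsBranching g (i + l) (e + l) := by
  have hshift : ∀ m k, SameFactor g m k (k + l) := fun m k =>
    sameFactor_of_periodic hper ⟨1, by ring⟩
  refine ⟨by linarith [h.le], fun a b _ _ _ => ?_, fun t ht => ?_⟩
  · rw [← hper.sub_eq a, ← hper.sub_eq b]
    exact h.isPal _ _ (by omega) (by omega) (by omega)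
  · rw [add_sub_add_right_eq_sub] at ht ⊢
    rw [add_sub_right_comm] at ht ⊢
    rw [hper]
    exact h.ne_of_sameFactor t ((hshift _ _).trans ht)

theorem IsBranching.richTo_update (h : IsBranching g i e) (hi : 0 < i) (hg : RichTo g e) :
    RichTo (Function.update g e (g (i - 1))) (e + 1) := by
  have hie := h.le
  have hupd : ∀ k, k < e → Function.update g e (g (i - 1)) k = g k :=
    fun k hk => Function.update_of_ne hk.ne _ _
  refine (hg.congr fun k hk => hupd k hk.2).succ ⟨i - 1, by omega, by omega, ?_, ?_⟩
  · refine (h.isPal.congr fun k hk => hupd k hk.2).extend ?_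
    rw [hupd _ (by omega), Function.update_self]
  · intro t _ hti ht
    refine h.ne_of_sameFactor t (fun a b _ _ _ => ?_) ?_
    · rw [← hupd a (by omega), ← hupd b (by omega)]
      exact ht a b (by omega) (by omega) (by omega)
    · have := ht e (t + (e - i + 1)) (by omega) (by omega) (by omega)
      rw [Function.update_self, hupd _ (by omega)] at this
      exact this.symm

/-- The mirror image of the palindrome in the axis `(M - 1) / 2` starts at `M - e`. -/
theorem IsRichPeriodic.dvd_of_sameFactor (h : IsRichPeriodic g d M) (heM : e < M) (hie : i ≤ e)
    (hi : IsLeast {i | M - e < i ∧ i < M - e + d ∧ IsPal g i e} i)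
    (he : ¬ HasPalBetweenAxes g d M (e + 1)) (ht : SameFactor g (e - i) i t) :
    d ∣ t - i ∨ d ∣ t - (M - e) := by
  obtain ⟨⟨hMi, hid, hpal⟩, hmin⟩ := hi
  have hpal' : IsPal g i (i + (e - i)) := by rwa [add_sub_cancel]
  set u := M - e + (t - (M - e)) % d with hu
  have hu0 := Int.emod_nonneg (t - (M - e)) h.pos.ne'
  have hud := Int.emod_lt_of_pos (t - (M - e)) h.pos
  have htu : d ∣ t - u := by
    rw [hu, ← sub_sub]
    exact Int.dvd_self_sub_emod
  have hocc : SameFactor g (e - i) i u := ht.trans <|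
    sameFactor_of_periodic h.periodic (dvd_sub_comm.1 htu)
  rcases lt_trichotomy u i with hui | rfl | hiu
  · rcases hu0.eq_or_lt with h0 | hpos
    · exact .inr (by rwa [hu, ← h0, add_zero] at htu)
    obtain ⟨v, huv, hvi, hv⟩ := (h.richTo _).exists_isPal_of_sameFactor_left (by omega) hui
      (by omega) (hpal'.of_sameFactor hocc) hocc.symm
    rw [add_sub_cancel] at hv
    exact absurd (hmin ⟨by omega, by omega, hv⟩) hvi.not_ge
  · exact .inl htu
  · obtain ⟨v, hiv, hvu, hv⟩ := (h.richTo _).exists_isPal_of_sameFactor_right (by omega) hiu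
      (by omega) hpal' hocc
    refine absurd ⟨v - 1, by omega, by omega, ?_⟩ he
    convert hv.shrink (k := v - 1 - i) (by omega) using 1 <;> ring

theorem IsRichPeriodic.exists_isBranching (h : IsRichPeriodic g d M) (hMe : M < 2 * e) (heM : e < M)
    (he : HasPalBetweenAxes g d M e) (he' : ¬ HasPalBetweenAxes g d M (e + 1)) :
    ∃ i, 0 < i ∧ IsBranching g i e := by
  obtain ⟨i, hi, hmin⟩ := Int.exists_least_of_bdd
    (P := fun i => M - e < i ∧ i < M - e + d ∧ IsPal g i e) ⟨M - e, fun _ hz => hz.1.le⟩ he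
  obtain ⟨hMi, hid, hpal⟩ := hi
  have hie : i ≤ e := by
    by_contra! hei
    exact (hmin e ⟨by omega, by omega, isPal_of_le_add_one (by omega)⟩).not_gt hei
  have hne : g (i - 1) ≠ g e := fun heq =>
    he' ⟨i - 1, by omega, by omega, hpal.extend heq⟩
  refine ⟨i, by omega, hie, hpal, fun t ht htx => ?_⟩
  have hocc : SameFactor g (e - i) i (t + 1) :=
    fun a b _ _ _ => ht a b (by omega) (by omega) (by omega)
  rcases h.dvd_of_sameFactor heM hie ⟨⟨hMi, hid, hpal⟩, hmin⟩ he' hocc with hd | hd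
  · refine hne (htx.symm.trans (eq_of_periodic_of_dvd_sub h.periodic ?_))
    rwa [show t + (e - i + 1) - e = t + 1 - i by ring]
  · have hx : g (i - 1) = g t := ht (i - 1) t le_rfl (by omega) (by omega)
    rw [hx, h.reflect e (M - e - 1) (by ring)] at hne
    refine hne (eq_of_periodic_of_dvd_sub h.periodic ?_)
    rwa [show t - (M - e - 1) = t + 1 - (M - e) by ring]

theorem IsRichPeriodic.exists_hasPalBetweenAxes_not_succ (h : IsRichPeriodic g d M) (hd : 2 ≤ d)
    (hnM : n ≤ M) (hMn : M < 2 * n) :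
    ∃ e, (n ≤ e ∨ d ≤ n) ∧ M < 2 * e ∧ e < M ∧ HasPalBetweenAxes g d M e ∧
      ¬ HasPalBetweenAxes g d M (e + 1) := by
  have hM : ¬ HasPalBetweenAxes g d M M := by
    rintro ⟨i, hi0, hid, hi⟩
    exact h.not_isPal i (by omega) (by omega) hi
  rcases le_or_gt d n with hdn | hnd
  · obtain ⟨e, hMe, heM, he, he'⟩ := exists_and_not_succ (p := HasPalBetweenAxes g d M)
      (a := M / 2 + 1) (by omega)
      ⟨M - M / 2, by omega, by omega, isPal_of_le_add_one (by omega)⟩ hM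
    exact ⟨e, .inr hdn, by omega, heM, he, he'⟩
  · obtain ⟨e, hne, heM, he, he'⟩ := exists_and_not_succ (p := HasPalBetweenAxes g d M) hnM
      ⟨n, by omega, by omega, isPal_of_le_add_one (by omega)⟩ hM
    exact ⟨e, .inl hne, by omega, heM, he, he'⟩

theorem IsRichPeriodic.exists_isBranching_mem_Icc (h : IsRichPeriodic g d M) (hd : 2 ≤ d)
    (hnM : n ≤ M) (hMn : M < 2 * n) :
    ∃ i e, 0 < i ∧ e ∈ Set.Icc n (2 * n) ∧ IsBranching g i e := by
  obtain ⟨e, hne, hMe, heM, he, he'⟩ := h.exists_hasPalBetweenAxes_not_succ hd hnM hMn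
  obtain ⟨i, hi, hbranch⟩ := h.exists_isBranching hMe heM he he'
  obtain ⟨D, hdD, hD0, heD⟩ := exists_dvd_add_mem_Icc h.pos (by omega) hne
  exact ⟨i + D, e + D, by omega, heD, hbranch.add_period fun k =>
    eq_of_periodic_of_dvd_sub h.periodic (by rwa [add_sub_cancel_left])⟩

theorem RichTo.exists_two_extensions [Nontrivial A] (h : RichTo f n) (hn : 0 < n) :
    ∃ (g : ℤ → A) (e : ℤ) (a : A), Set.EqOn g f (Set.Ico 0 n) ∧ e ∈ Set.Icc n (2 * n) ∧
      RichTo g (e + 1) ∧ a ≠ g e ∧ RichTo (Function.update g e a) (e + 1) := by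
  obtain ⟨f', M, hnM, hMn, hf', hpal, hrich⟩ := h.exists_isPal_extension hn
  obtain ⟨g, d, hgf', hg⟩ := hrich.exists_isRichPeriodic (hn.trans_le hnM) hpal
  have hgf : Set.EqOn g f (Set.Ico 0 n) :=
    (hgf'.mono (Set.Ico_subset_Ico_right hnM)).trans hf'
  by_cases hsurj : Function.Surjective g
  · obtain ⟨i, e, hi, he, hbranch⟩ :=
      hg.exists_isBranching_mem_Icc (hg.two_le_of_surjective hsurj) hnM hMn
    exact ⟨g, e, g (i - 1), hgf, he, hg.richTo _, hbranch.ne,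
      hbranch.richTo_update hi (hg.richTo _)⟩
  · obtain ⟨a, ha⟩ := not_forall.1 hsurj
    exact ⟨g, n, a, hgf, ⟨le_rfl, by omega⟩, hg.richTo _, fun han => ha ⟨n, han.symm⟩,
      (hg.richTo _).update_of_notMem_range hn.le ha⟩

end PeriodicSequences

section PalindromicFactors

variable {A : Type*} {p q v : List A} {x : A}

/-- The palindromic factors of `w`, including the empty word. -/
def palindromicFactors (w : List A) : Set (List A) :=
  {p | p.reverse = p ∧ p <:+: w}

theorem finite_palindromicFactors (w : List A) : (palindromicFactors w).Finite :=
  (List.finite_toSet w.sublists).subset fun _ hp => List.mem_sublists.2 hp.2.sublist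

theorem isInfix_of_palindrome_suffix_of_length_lt (hp : p.reverse = p) (hq : q.reverse = q)
    (hpv : p <:+ v ++ [x]) (hqv : q <:+ v ++ [x]) (hlt : p.length < q.length) : p <:+: v := by
  -- Being palindromes, `p` is also a prefix of `q`.
  have hpq : p <+: q := by
    have := List.suffix_of_suffix_length_le hpv hqv hlt.le
    rwa [← hp, ← hq, List.reverse_suffix] at this
  rcases List.eq_nil_or_concat q with rfl | ⟨r, y, rfl⟩
  · simp at hlt
  have hpr : p <+: r := (List.prefix_concat_iff.1 (by simpa using hpq)).resolve_left
    fun h => by simp [h] at hlt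
  have hrv : r <:+ v := by
    rcases List.suffix_concat_iff.1 hqv with h | ⟨t, h, ht⟩
    · simp at h
    · obtain ⟨rfl, -⟩ : r = t ∧ y = x := by simpa using h
      exact ht
  exact hpr.isInfix.trans hrv.isInfix

theorem palindromicFactors_concat (hp : p.reverse = p) (hpv : p <:+ v ++ [x])
    (hnew : ¬ p <:+: v) :
    palindromicFactors (v ++ [x]) = insert p (palindromicFactors v) := by
  ext q
  constructor
  · rintro ⟨hq, hqvx⟩
    by_cases hqv : q <:+: v
    · exact .inr ⟨hq, hqv⟩
    have hqs := (List.infix_concat_iff.1 hqvx).resolve_right hqv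
    rcases lt_trichotomy q.length p.length with hlt | heq | hgt
    · exact absurd (isInfix_of_palindrome_suffix_of_length_lt hq hp hqs hpv hlt) hqv
    · exact .inl ((List.suffix_of_suffix_length_le hqs hpv heq.le).eq_of_length heq)
    · exact absurd (isInfix_of_palindrome_suffix_of_length_lt hp hq hpv hqs hgt) hnew
  · rintro (rfl | ⟨hq, hqv⟩)
    · exact ⟨hp, hpv.isInfix⟩
    · exact ⟨hq, hqv.trans (List.prefix_append v [x]).isInfix⟩

theorem ncard_palindromicFactors_concat_of_exists
    (h : ∃ p, p.reverse = p ∧ p <:+ v ++ [x] ∧ ¬ p <:+: v) :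
    (palindromicFactors (v ++ [x])).ncard = (palindromicFactors v).ncard + 1 := by
  obtain ⟨p, hp, hpv, hnew⟩ := h
  rw [palindromicFactors_concat hp hpv hnew,
    Set.ncard_insert_of_notMem (fun hmem => hnew hmem.2) (finite_palindromicFactors v)]

theorem ncard_palindromicFactors_concat_of_not_exists
    (h : ¬ ∃ p, p.reverse = p ∧ p <:+ v ++ [x] ∧ ¬ p <:+: v) :
    (palindromicFactors (v ++ [x])).ncard ≤ (palindromicFactors v).ncard := by
  push Not at h
  exact Set.ncard_le_ncard (fun p hp => ⟨hp.1, (List.infix_concat_iff.1 hp.2).elim (h p hp.1) id⟩)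
    (finite_palindromicFactors v)

theorem palindromicFactors_nil : palindromicFactors ([] : List A) = {[]} := by
  ext p
  simp +contextual [palindromicFactors, List.infix_nil]

theorem ncard_palindromicFactors_le (w : List A) :
    (palindromicFactors w).ncard ≤ w.length + 1 := by
  induction w using List.reverseRecOn with
  | nil => simp [palindromicFactors_nil]
  | append_singleton v x ih =>
    rw [List.length_append, List.length_singleton]
    by_cases h : ∃ p, p.reverse = p ∧ p <:+ v ++ [x] ∧ ¬ p <:+: v
    · rw [ncard_palindromicFactors_concat_of_exists h]
      omega
    · have := ncard_palindromicFactors_concat_of_not_exists h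
      omega

theorem rich_nil : Rich ([] : List A) := by
  change (palindromicFactors []).ncard = _
  simp [palindromicFactors_nil]

theorem rich_concat_iff :
    Rich (v ++ [x]) ↔ Rich v ∧ ∃ p, p.reverse = p ∧ p <:+ v ++ [x] ∧ ¬ p <:+: v := by
  have hle := ncard_palindromicFactors_le v
  change (palindromicFactors (v ++ [x])).ncard = _ ↔ (palindromicFactors v).ncard = _ ∧ _
  rw [List.length_append, List.length_singleton]
  by_cases h : ∃ p, p.reverse = p ∧ p <:+ v ++ [x] ∧ ¬ p <:+: v
  · rw [ncard_palindromicFactors_concat_of_exists h, add_left_inj, and_iff_left h]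
  · have := ncard_palindromicFactors_concat_of_not_exists h
    refine iff_of_false ?_ fun hv => h hv.2
    omega

end PalindromicFactors

section FactorLists

variable {A : Type*} {f g : ℤ → A} {p q : List A} {i j : ℤ} {l n N : ℕ}

/-- The factor of `f` of length `l` starting at position `i`, as a list. -/
def factor (f : ℤ → A) (i : ℤ) (l : ℕ) : List A :=
  (List.range l).map fun k : ℕ => f (i + k)

@[simp]
theorem length_factor (f : ℤ → A) (i : ℤ) (l : ℕ) : (factor f i l).length = l := by
  simp [factor]

theorem factor_add (f : ℤ → A) (i : ℤ) (l m : ℕ) :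
    factor f i (l + m) = factor f i l ++ factor f (i + l) m := by
  simp [factor, List.range_add, Function.comp_def, add_assoc]

theorem factor_zero_succ (f : ℤ → A) (n : ℕ) :
    factor f 0 (n + 1) = factor f 0 n ++ [f n] := by
  simp [factor, List.range_succ]

theorem factor_congr (h : Set.EqOn g f (Set.Ico 0 n)) : factor g 0 n = factor f 0 n :=
  List.map_congr_left fun k hk => h (by simpa using hk)

theorem factor_update_succ (g : ℤ → A) (n : ℕ) (a : A) :
    factor (Function.update g n a) 0 (n + 1) = factor g 0 n ++ [a] := by
  rw [factor_zero_succ, Function.update_self,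
    factor_congr fun k hk => Function.update_of_ne hk.2.ne a g]

theorem exists_eq_factor [Nonempty A] (w : List A) : ∃ f : ℤ → A, w = factor f 0 w.length := by
  inhabit A
  exact ⟨fun k => w.getD k.toNat default, List.ext_getElem (by simp) fun k hk _ => by
    simp [factor, hk]⟩

theorem factor_eq_factor_iff : factor f i l = factor f j l ↔ SameFactor f l i j := by
  simp only [factor, List.map_inj_left, List.mem_range]
  constructor
  · intro h a b _ _ _
    convert h (a - i).toNat (by omega) using 2 <;> omega
  · exact fun h k hk => h _ _ (by omega) (by omega) (by omega)

theorem reverse_factor_iff : (factor f i l).reverse = factor f i l ↔ IsPal f i (i + l) := by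
  rw [List.ext_getElem_iff]
  simp only [List.length_reverse, length_factor, true_and, List.getElem_reverse]
  simp only [factor, List.getElem_map, List.getElem_range]
  constructor
  · intro h a b _ _ _
    convert h (b - i).toNat (by omega) (by omega) using 2 <;> omega
  · exact fun h k hk _ => h _ _ (by omega) (by omega) (by omega)

theorem append_eq_factor_iff :
    p ++ q = factor f i N ↔ p.length + q.length = N ∧ p = factor f i p.length ∧
      q = factor f (i + p.length) q.length := by
  constructor
  · intro h
    have hN : p.length + q.length = N := by simpa using congrArg List.length h
    rw [← hN, factor_add] at h
    exact ⟨hN, List.append_inj h (by simp)⟩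
  · rintro ⟨rfl, hp, hq⟩
    rw [factor_add, ← hp, ← hq]

theorem isSuffix_factor_iff :
    p <:+ factor f 0 N ↔ ∃ t : ℕ, t + p.length = N ∧ p = factor f t p.length := by
  constructor
  · rintro ⟨a, ha⟩
    obtain ⟨hN, -, hp⟩ := append_eq_factor_iff.1 ha
    exact ⟨a.length, hN, by rwa [zero_add] at hp⟩
  · rintro ⟨t, rfl, hp⟩
    exact ⟨factor f 0 t, by rw [factor_add, zero_add, ← hp]⟩

theorem isInfix_factor_iff :
    p <:+: factor f 0 N ↔ ∃ t : ℕ, t + p.length ≤ N ∧ p = factor f t p.length := by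
  rw [List.infix_iff_suffix_prefix]
  constructor
  · rintro ⟨q, hpq, b, hb⟩
    obtain ⟨hN, hq, -⟩ := append_eq_factor_iff.1 hb
    rw [hq, isSuffix_factor_iff] at hpq
    obtain ⟨t, ht, hp⟩ := hpq
    exact ⟨t, by omega, hp⟩
  · rintro ⟨t, ht, hp⟩
    refine ⟨factor f 0 (t + p.length), isSuffix_factor_iff.2 ⟨t, rfl, hp⟩, ?_⟩
    obtain ⟨m, rfl⟩ := Nat.exists_eq_add_of_le ht
    exact ⟨_, (factor_add f 0 _ m).symm⟩

theorem hasUnioccurrentPalSuffix_succ_iff :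
    HasUnioccurrentPalSuffix f (n + 1) ↔
      ∃ p, p.reverse = p ∧ p <:+ factor f 0 (n + 1) ∧ ¬ p <:+: factor f 0 n := by
  simp only [isSuffix_factor_iff, isInfix_factor_iff]
  constructor
  · rintro ⟨s, hs0, hsn, hpal, huni⟩
    lift s to ℕ using hs0
    have hlen : ((n + 1 - s : ℕ) : ℤ) = n + 1 - s := by omega
    refine ⟨factor f s (n + 1 - s), ?_,
      ⟨s, by rw [length_factor]; omega, by rw [length_factor]⟩, ?_⟩
    · rwa [reverse_factor_iff, hlen, add_sub_cancel]
    · rintro ⟨t, ht, heq⟩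
      rw [length_factor] at ht heq
      rw [factor_eq_factor_iff, hlen] at heq
      exact huni t (by omega) (by omega) heq
  · rintro ⟨p, hp, ⟨s, hs, hps⟩, hnew⟩
    have hlen : (n + 1 : ℤ) - s = p.length := by omega
    have hp0 : p.length ≠ 0 := fun h0 =>
      hnew ⟨0, by omega, by simp [List.length_eq_zero_iff.1 h0, factor]⟩
    refine ⟨s, by omega, by omega, ?_, fun t ht0 hts ht => ?_⟩
    · rw [hps, reverse_factor_iff] at hp
      rwa [← hlen, add_sub_cancel] at hp
    · lift t to ℕ using ht0
      rw [hlen, ← factor_eq_factor_iff] at ht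
      exact hnew ⟨t, by omega, hps.trans ht⟩

theorem rich_factor_iff_richTo : Rich (factor f 0 n) ↔ RichTo f n := by
  induction n with
  | zero => exact iff_of_true rich_nil fun N hN hN0 => absurd hN (by simpa using hN0)
  | succ n ih =>
    rw [factor_zero_succ, rich_concat_iff, ← factor_zero_succ, ih,
      ← hasUnioccurrentPalSuffix_succ_iff, Nat.cast_succ]
    exact ⟨fun ⟨hn, hsucc⟩ => hn.succ hsucc,
      fun h => ⟨h.mono (by omega), h _ (by omega) le_rfl⟩⟩

end FactorLists

theorem stmt12_general {A : Type*} [Nontrivial A] (w : List A) (hw : Rich w) (hne : w ≠ []) :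
    ∃ u : List A, u.length ≤ w.length ∧ Rich (w ++ u) ∧ TwoWays (w ++ u) := by
  obtain ⟨f, hwf⟩ := exists_eq_factor w
  rw [hwf, rich_factor_iff_richTo] at hw
  obtain ⟨g, e, a, hgf, ⟨hwe, hew⟩, hg, hae, hga⟩ :=
    hw.exists_two_extensions (by exact_mod_cast List.length_pos_iff.2 hne)
  obtain ⟨m, rfl⟩ := Int.le.dest hwe
  norm_cast at hew hg hae hga
  have hwu : w ++ factor g w.length m = factor g 0 (w.length + m) := by
    rw [factor_add, zero_add, factor_congr hgf, ← hwf]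
  refine ⟨factor g w.length m, by rw [length_factor]; omega, ?_, a, g (w.length + m : ℕ), hae, ?_⟩
  · rw [hwu]
    exact rich_factor_iff_richTo.2 (hg.mono (by omega))
  · rw [hwu, ← factor_update_succ, ← factor_zero_succ]
    exact ⟨rich_factor_iff_richTo.2 hga, rich_factor_iff_richTo.2 hg⟩

theorem stmt12 {A : Type*} [Fintype A] [Nontrivial A]
    (w : List A) (hw : Rich w) (hne : w ≠ []) :
    ∃ u : List A, u.length ≤ w.length ∧ Rich (w ++ u) ∧ TwoWays (w ++ u) :=
  stmt12_general w hw hne
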